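/- I_b^{(∞)} is convex: for bipartite states ρ_i and weights p_i, I_b^{(∞)}(∑_i p_i ρ_i) ≤ ∑_i p_i I_b^{(∞)}(ρ_i). -/

import Mathlib

open scoped BigOperators Kronecker ComplexOrder
open Matrix Filter Topology

noncomputable section

/-- Shannon entropy (log base 2) of a finitely supported distribution. -/
def shannon {I : Type} [Fintype I] (p : I → ℝ) : ℝ := -∑ i, p i * Real.logb 2 (p i)

/-- `p` is a probability distribution. -/
def IsProbDist {I : Type} [Fintype I] (p : I → ℝ) : Prop :=
  (∀ i, 0 ≤ p i) ∧ ∑ i, p i = 1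

/-- First marginal of a joint distribution. -/
def margA {I J : Type} [Fintype J] (p : I × J → ℝ) : I → ℝ := fun i => ∑ j, p (i, j)

/-- Second marginal of a joint distribution. -/
def margB {I J : Type} [Fintype I] (p : I × J → ℝ) : J → ℝ := fun j => ∑ i, p (i, j)

/-- Classical mutual information of a joint distribution. -/
def classMI {I J : Type} [Fintype I] [Fintype J] (p : I × J → ℝ) : ℝ :=
  shannon (margA p) + shannon (margB p) - shannon p

/-- Kullback-Leibler divergence (log base 2). -/
def klDiv {I : Type} [Fintype I] (p q : I → ℝ) : ℝ := ∑ i, p i * Real.logb 2 (p i / q i)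

/-- A density operator: positive semidefinite with unit trace. -/
def IsDensity {n : Type} [Fintype n] (ρ : Matrix n n ℂ) : Prop :=
  ρ.PosSemidef ∧ ρ.trace = 1

/-- Von Neumann entropy (log base 2) via the eigenvalues of a Hermitian matrix. -/
def vnEntropy {n : Type} [Fintype n] [DecidableEq n] (ρ : Matrix n n ℂ) : ℝ :=
  if h : ρ.IsHermitian then -∑ i, h.eigenvalues i * Real.logb 2 (h.eigenvalues i) else 0

/-- Partial trace over the second tensor factor. -/
def ptraceB {A B : Type} [Fintype B] (ρ : Matrix (A × B) (A × B) ℂ) : Matrix A A ℂ :=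
  Matrix.of fun a a' => ∑ b, ρ (a, b) (a', b)

/-- Partial trace over the first tensor factor. -/
def ptraceA {A B : Type} [Fintype A] (ρ : Matrix (A × B) (A × B) ℂ) : Matrix B B ℂ :=
  Matrix.of fun b b' => ∑ a, ρ (a, b) (a, b')

/-- Quantum mutual information I(A:B) = S(ρ_A) + S(ρ_B) - S(ρ_{AB}). -/
def mutInfo {A B : Type} [Fintype A] [Fintype B] [DecidableEq A] [DecidableEq B]
    (ρ : Matrix (A × B) (A × B) ℂ) : ℝ :=
  vnEntropy (ptraceB ρ) + vnEntropy (ptraceA ρ) - vnEntropy ρ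

/-- Tensor product of two bipartite states, with the cut (A₁A₂ : B₁B₂). -/
def tens2 {A₁ B₁ A₂ B₂ : Type}
    (ρ : Matrix (A₁ × B₁) (A₁ × B₁) ℂ) (σ : Matrix (A₂ × B₂) (A₂ × B₂) ℂ) :
    Matrix ((A₁ × A₂) × (B₁ × B₂)) ((A₁ × A₂) × (B₁ × B₂)) ℂ :=
  Matrix.of fun x y => ρ (x.1.1, x.2.1) (y.1.1, y.2.1) * σ (x.1.2, x.2.2) (y.1.2, y.2.2)

/-- n-fold tensor power of a bipartite state, with the A^n : B^n cut. -/
def tpow {A B : Type} (σ : Matrix (A × B) (A × B) ℂ) (n : ℕ) :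
    Matrix ((Fin n → A) × (Fin n → B)) ((Fin n → A) × (Fin n → B)) ℂ :=
  Matrix.of fun x y => ∏ i, σ (x.1 i, x.2 i) (y.1 i, y.2 i)

/-- Reduced state of the k-th copy (partial trace over all other copies). -/
def copyMarginal {A B : Type} [Fintype A] [Fintype B] [DecidableEq A] [DecidableEq B] {n : ℕ}
    (ρ : Matrix ((Fin n → A) × (Fin n → B)) ((Fin n → A) × (Fin n → B)) ℂ) (k : Fin n) :
    Matrix (A × B) (A × B) ℂ :=
  Matrix.of fun x y => ∑ f : Fin n → A, ∑ g : Fin n → B,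
    if f k = x.1 ∧ g k = x.2 then
      ρ (f, g) (Function.update f k y.1, Function.update g k y.2) else 0

/-- `τ` is an n-copy broadcast state of `ρ`. -/
def IsBroadcast {A B : Type} [Fintype A] [Fintype B] [DecidableEq A] [DecidableEq B] (n : ℕ)
    (τ : Matrix ((Fin n → A) × (Fin n → B)) ((Fin n → A) × (Fin n → B)) ℂ)
    (ρ : Matrix (A × B) (A × B) ℂ) : Prop :=
  IsDensity τ ∧ ∀ k : Fin n, copyMarginal τ k = ρ

/-- n-copy broadcast mutual information (I_b)_n. -/
def Ib {A B : Type} [Fintype A] [Fintype B] [DecidableEq A] [DecidableEq B] (n : ℕ)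
    (ρ : Matrix (A × B) (A × B) ℂ) : ℝ :=
  sInf {x | ∃ τ, IsBroadcast n τ ρ ∧ x = mutInfo τ}

/-- Partial trace of a state on (A A' : B B') over the primed (ancilla) systems. -/
def ptracePrime {A B A' B' : Type} [Fintype A'] [Fintype B']
    (τ : Matrix ((A × A') × (B × B')) ((A × A') × (B × B')) ℂ) :
    Matrix (A × B) (A × B) ℂ :=
  Matrix.of fun x y => ∑ a', ∑ b', τ ((x.1, a'), (x.2, b')) ((y.1, a'), (y.2, b'))

/-- Partial trace of a state on (A A' : B B') over the unprimed systems. -/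
def ptraceMain {A B A' B' : Type} [Fintype A] [Fintype B]
    (τ : Matrix ((A × A') × (B × B')) ((A × A') × (B × B')) ℂ) :
    Matrix (A' × B') (A' × B') ℂ :=
  Matrix.of fun x y => ∑ a, ∑ b, τ ((a, x.1), (b, x.2)) ((a, y.1), (b, y.2))

/-- Conditional entanglement of mutual information (CEMI). -/
def EI {A B : Type} [Fintype A] [Fintype B] [DecidableEq A] [DecidableEq B]
    (ρ : Matrix (A × B) (A × B) ℂ) : ℝ :=
  (1 / 2) * sInf {x | ∃ (dA dB : ℕ)
    (τ : Matrix ((A × Fin dA) × (B × Fin dB)) ((A × Fin dA) × (B × Fin dB)) ℂ),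
    IsDensity τ ∧ ptracePrime τ = ρ ∧ x = mutInfo τ - mutInfo (ptraceMain τ)}

/-- Classical squashed entanglement, via the ensemble formula. -/
def EsqC {A B : Type} [Fintype A] [Fintype B] [DecidableEq A] [DecidableEq B]
    (ρ : Matrix (A × B) (A × B) ℂ) : ℝ :=
  (1 / 2) * sInf {x | ∃ (m : ℕ) (p : Fin m → ℝ) (σ : Fin m → Matrix (A × B) (A × B) ℂ),
    (∀ k, 0 ≤ p k) ∧ (∑ k, p k = 1) ∧ (∀ k, IsDensity (σ k)) ∧
    (∑ k, (p k : ℂ) • σ k = ρ) ∧ x = ∑ k, p k * mutInfo (σ k)}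

/-- Separability of a bipartite state. -/
def Separable {A B : Type} [Fintype A] [Fintype B]
    (ρ : Matrix (A × B) (A × B) ℂ) : Prop :=
  ∃ (m : ℕ) (p : Fin m → ℝ) (σA : Fin m → Matrix A A ℂ) (σB : Fin m → Matrix B B ℂ),
    (∀ k, 0 ≤ p k) ∧ (∑ k, p k = 1) ∧ (∀ k, IsDensity (σA k) ∧ IsDensity (σB k)) ∧
    ρ = ∑ k, (p k : ℂ) • (σA k ⊗ₖ σB k)

/-- A finite POVM. -/
def IsPOVM {A ι : Type} [Fintype A] [Fintype ι] [DecidableEq A]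
    (M : ι → Matrix A A ℂ) : Prop :=
  (∀ i, (M i).PosSemidef) ∧ ∑ i, M i = 1

/-- Outcome distribution of a local product measurement. -/
def measProb {A B ι κ : Type} [Fintype A] [Fintype B]
    (M : ι → Matrix A A ℂ) (N : κ → Matrix B B ℂ)
    (ρ : Matrix (A × B) (A × B) ℂ) : ι × κ → ℝ :=
  fun x => (((M x.1 ⊗ₖ N x.2) * ρ).trace).re

/-- Completeness condition for a family of Kraus operators. -/
def IsKraus {A A' ι : Type} [Fintype A] [Fintype A'] [Fintype ι] [DecidableEq A]
    (K : ι → Matrix A' A ℂ) : Prop :=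
  ∑ i, (K i)ᴴ * K i = 1

/-- Action of the product channel Λ_A ⊗ Λ_B (given by Kraus operators) on a bipartite state. -/
def localApply {A B A' B' ι κ : Type} [Fintype A] [Fintype B] [Fintype ι] [Fintype κ]
    (K : ι → Matrix A' A ℂ) (L : κ → Matrix B' B ℂ)
    (ρ : Matrix (A × B) (A × B) ℂ) : Matrix (A' × B') (A' × B') ℂ :=
  ∑ i, ∑ j, (K i ⊗ₖ L j) * ρ * (K i ⊗ₖ L j)ᴴ

/-- Measured relative entropy distance to separable states (with optimization over local POVMs). -/
def measREE {A B : Type} [Fintype A] [Fintype B] [DecidableEq A] [DecidableEq B]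
    (ρ : Matrix (A × B) (A × B) ℂ) : ℝ :=
  sInf {x | ∃ σ : Matrix (A × B) (A × B) ℂ, IsDensity σ ∧ Separable σ ∧
    x = sSup {y | ∃ (m m' : ℕ) (M : Fin m → Matrix A A ℂ) (N : Fin m' → Matrix B B ℂ),
      IsPOVM M ∧ IsPOVM N ∧ y = klDiv (measProb M N ρ) (measProb M N σ)}}

/-! The entropy `S(M)` of a positive matrix is the least Shannon entropy of its diagonal over all
orthonormal bases (Schur: a diagonal is a doubly stochastic image of the spectrum).  Computing the
entropy of a mixture in its own eigenbasis, this gives concavity of `S`.  Writing instead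
`∑ pₖ σₖ = X Xᴴ`, where the columns of `X` are the eigenvectors of the `σₖ` scaled by the square
roots of `pₖ` times the eigenvalues, `S(X Xᴴ) = S(Xᴴ X)` is at most the Shannon entropy of the
squared column norms, so `S(∑ pₖ σₖ) ≤ ∑ pₖ S(σₖ) + H(p)`.

Hence mutual information is convex up to `2 H(p)`.  Mixtures of broadcast states are broadcast
states of the mixture, so the same holds for `Ib n`, with an error independent of `n`, which
disappears after division by `n`. -/

section Majorization

variable {m n 𝕜 : Type*} [Fintype m] [Fintype n] [DecidableEq m] [DecidableEq n] [RCLike 𝕜]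

theorem sum_map_le_sum_map_mulVec_of_doublyStochastic {D : Matrix n n ℝ}
    (hD : D ∈ doublyStochastic ℝ n) {s : Set ℝ} {f : ℝ → ℝ} (hf : ConcaveOn ℝ s f)
    {x : n → ℝ} (hx : ∀ i, x i ∈ s) :
    ∑ i, f (x i) ≤ ∑ i, f ((D *ᵥ x) i) :=
  calc ∑ j, f (x j) = ∑ j, ∑ i, D i j * f (x j) := by
        simp only [← Finset.sum_mul, sum_col_of_mem_doublyStochastic hD, one_mul]
    _ = ∑ i, ∑ j, D i j * f (x j) := Finset.sum_comm
    _ ≤ ∑ i, f ((D *ᵥ x) i) := Finset.sum_le_sum fun i _ =>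
        hf.le_map_sum (fun _ _ => nonneg_of_mem_doublyStochastic hD)
          (sum_row_of_mem_doublyStochastic hD i) fun j _ => hx j

theorem sum_norm_sq_row_of_mem_unitaryGroup {U : Matrix n n 𝕜} (hU : U ∈ unitaryGroup n 𝕜)
    (i : n) : ∑ j, ‖U i j‖ ^ 2 = 1 := by
  have h : (U * star U) i i = 1 := by rw [mem_unitaryGroup_iff.1 hU, one_apply_eq]
  simp only [mul_apply, star_apply, RCLike.star_def, RCLike.mul_conj] at h
  exact_mod_cast h

theorem of_norm_sq_mem_doublyStochastic {U : Matrix n n 𝕜} (hU : U ∈ unitaryGroup n 𝕜) :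
    of (fun i j => ‖U i j‖ ^ 2) ∈ doublyStochastic ℝ n := by
  refine mem_doublyStochastic_iff_sum.2 ⟨fun i j => sq_nonneg _,
    sum_norm_sq_row_of_mem_unitaryGroup hU, fun j => ?_⟩
  simpa only [star_apply, norm_star, of_apply] using
    sum_norm_sq_row_of_mem_unitaryGroup (Unitary.star_mem hU) j

theorem re_diag_eq_mulVec_eigenvalues {M : Matrix n n 𝕜} (hM : M.IsHermitian) (i : n) :
    RCLike.re (M i i) =
      (of (fun i j => ‖(hM.eigenvectorUnitary : Matrix n n 𝕜) i j‖ ^ 2) *ᵥ hM.eigenvalues) i := by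
  conv_lhs => rw [hM.spectral_theorem, Unitary.conjStarAlgAut_apply, mul_apply]
  simp only [mulVec, dotProduct, of_apply, map_sum]
  refine Finset.sum_congr rfl fun j _ => ?_
  rw [mul_diagonal, star_apply, mul_right_comm, RCLike.star_def, RCLike.mul_conj,
    ← RCLike.ofReal_pow, Function.comp_apply, ← RCLike.ofReal_mul, RCLike.ofReal_re]

theorem sum_map_eigenvalues_le_sum_map_diag {M : Matrix n n 𝕜} (hM : M.IsHermitian)
    {s : Set ℝ} {f : ℝ → ℝ} (hf : ConcaveOn ℝ s f) (hs : ∀ i, hM.eigenvalues i ∈ s) :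
    ∑ i, f (hM.eigenvalues i) ≤ ∑ i, f (RCLike.re (M i i)) := by
  simp only [re_diag_eq_mulVec_eigenvalues hM]
  exact sum_map_le_sum_map_mulVec_of_doublyStochastic
    (of_norm_sq_mem_doublyStochastic hM.eigenvectorUnitary.2) hf hs

theorem sum_map_eigenvalues_mul_conjTranspose_comm (X : Matrix m n 𝕜) {f : ℝ → ℝ}
    (hf : f 0 = 0) :
    ∑ i, f ((isHermitian_mul_conjTranspose_self X).eigenvalues i) =
      ∑ j, f ((isHermitian_conjTranspose_mul_self X).eigenvalues j) := by
  have hroots := congrArg Polynomial.roots (charpoly_mul_comm' X Xᴴ)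
  have hX_pow (k : ℕ) : (Polynomial.X ^ k : Polynomial 𝕜) ≠ 0 :=
    pow_ne_zero k Polynomial.X_ne_zero
  rw [Polynomial.roots_mul (mul_ne_zero (hX_pow _) (charpoly_monic _).ne_zero),
    Polynomial.roots_mul (mul_ne_zero (hX_pow _) (charpoly_monic _).ne_zero),
    (isHermitian_mul_conjTranspose_self X).roots_charpoly_eq_eigenvalues,
    (isHermitian_conjTranspose_mul_self X).roots_charpoly_eq_eigenvalues,
    Polynomial.roots_X_pow, Polynomial.roots_X_pow] at hroots
  have hsum := congrArg (fun s : Multiset 𝕜 => (s.map fun z => f (RCLike.re z)).sum) hroots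
  simpa [Multiset.map_nsmul, Multiset.sum_nsmul, hf] using hsum

theorem exists_mul_conjTranspose_eq_and_conjTranspose_mul_eq_diagonal {M : Matrix n n 𝕜}
    (hM : M.PosSemidef) :
    ∃ C : Matrix n n 𝕜, C * Cᴴ = M ∧
      Cᴴ * C = diagonal (RCLike.ofReal ∘ hM.isHermitian.eigenvalues) := by
  set U : Matrix n n 𝕜 := hM.isHermitian.eigenvectorUnitary.1 with hU
  set S : Matrix n n 𝕜 := diagonal fun i => ((√(hM.isHermitian.eigenvalues i) : ℝ) : 𝕜) with hS
  have hS_star : Sᴴ = S := by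
    simp only [hS, diagonal_conjTranspose, Pi.star_def, RCLike.star_def, RCLike.conj_ofReal]
  have hS_sq : S * S = diagonal (RCLike.ofReal ∘ hM.isHermitian.eigenvalues) := by
    rw [hS, diagonal_mul_diagonal]
    congr 1 with i
    rw [← RCLike.ofReal_mul, Real.mul_self_sqrt (hM.eigenvalues_nonneg i), Function.comp_apply]
  have hU_star : Uᴴ * U = 1 := Unitary.coe_star_mul_self hM.isHermitian.eigenvectorUnitary
  refine ⟨U * S, ?_, ?_⟩
  · conv_rhs => rw [hM.isHermitian.spectral_theorem, Unitary.conjStarAlgAut_apply, ← hS_sq, ← hU]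
    rw [conjTranspose_mul, hS_star, star_eq_conjTranspose]
    simp only [Matrix.mul_assoc]
  · rw [conjTranspose_mul, hS_star, ← hS_sq, Matrix.mul_assoc, ← Matrix.mul_assoc Uᴴ, hU_star,
      Matrix.one_mul]

end Majorization

section Shannon

variable {I K : Type} [Fintype I] [Fintype K]

theorem shannon_eq_sum_negMulLog_div (p : I → ℝ) :
    shannon p = (∑ i, Real.negMulLog (p i)) / Real.log 2 := by
  simp only [shannon, Real.negMulLog, Real.logb, ← Finset.sum_neg_distrib, Finset.sum_div,
    neg_mul, neg_div, mul_div_assoc]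

theorem concaveOn_shannon : ConcaveOn ℝ (Set.Ici (0 : I → ℝ)) shannon := by
  refine ⟨convex_Ici 0, fun p hp q hq a b ha hb hab => ?_⟩
  simp only [shannon_eq_sum_negMulLog_div, smul_eq_mul, ← mul_div_assoc, ← add_div,
    Finset.mul_sum, ← Finset.sum_add_distrib]
  gcongr with i
  exact Real.concaveOn_negMulLog.2 (hp i) (hq i) ha hb hab

theorem shannon_mul {p : K → ℝ} {q : K → I → ℝ} (hq : ∀ k, ∑ i, q k i = 1) :
    shannon (fun x : K × I => p x.1 * q x.1 x.2) = ∑ k, p k * shannon (q k) + shannon p := by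
  simp only [shannon_eq_sum_negMulLog_div, Fintype.sum_prod_type, Real.negMulLog_mul,
    Finset.sum_add_distrib, ← Finset.sum_mul, ← Finset.mul_sum, hq, one_mul, add_div,
    mul_div_assoc, Finset.sum_div]
  rw [add_comm]

theorem IsProbDist.shannon_nonneg {p : I → ℝ} (hp : IsProbDist p) : 0 ≤ shannon p := by
  rw [shannon_eq_sum_negMulLog_div]
  refine div_nonneg (Finset.sum_nonneg fun i _ => Real.negMulLog_nonneg (hp.1 i) ?_)
    (Real.log_nonneg one_le_two)
  exact (Finset.single_le_sum (fun j _ => hp.1 j) (Finset.mem_univ i)).trans_eq hp.2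

theorem IsProbDist.shannon_le_logb_card {p : I → ℝ} (hp : IsProbDist p) :
    shannon p ≤ Real.logb 2 (Fintype.card I) := by
  have hcard : (Fintype.card I : ℝ) ≠ 0 := by
    refine Nat.cast_ne_zero.2 fun h => ?_
    have := Fintype.card_eq_zero_iff.1 h
    simpa using hp.2
  have hjensen := Real.concaveOn_negMulLog.le_map_sum (t := Finset.univ)
    (w := fun _ : I => (Fintype.card I : ℝ)⁻¹) (fun _ _ => by positivity) (by simp [hcard])
    fun i _ => hp.1 i
  rw [shannon_eq_sum_negMulLog_div, Real.logb]
  gcongr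
  simp only [smul_eq_mul, ← Finset.mul_sum, hp.2, mul_one, Real.negMulLog, Real.log_inv] at hjensen
  rw [neg_mul_neg] at hjensen
  exact le_of_mul_le_mul_left hjensen (by positivity)

end Shannon

section Entropy

/-- The diagonal of a complex matrix `M`, as a real vector. For a state `M` these are the outcome
probabilities of a measurement in the standard basis. -/
def diagDist {n : Type} (M : Matrix n n ℂ) : n → ℝ := fun i => (M i i).re

variable {m n K : Type}

theorem diagDist_nonneg {M : Matrix n n ℂ} (hM : M.PosSemidef) : 0 ≤ diagDist M :=
  fun _ => (Complex.le_def.1 hM.diag_nonneg).1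

theorem diagDist_smul_add_smul (a b : ℝ) (M N : Matrix n n ℂ) :
    diagDist (a • M + b • N) = a • diagDist M + b • diagDist N := by
  ext i
  simp [diagDist]

theorem convex_posSemidef : Convex ℝ {M : Matrix n n ℂ | M.PosSemidef} :=
  fun _ hM _ hN _ _ ha hb _ => (hM.smul ha).add (hN.smul hb)

variable [Fintype m] [Fintype n] [Fintype K]

theorem convex_isDensity : Convex ℝ {ρ : Matrix n n ℂ | IsDensity ρ} := by
  refine fun ρ hρ σ hσ a b ha hb hab => ⟨convex_posSemidef hρ.1 hσ.1 ha hb hab, ?_⟩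
  rw [trace_add, trace_smul, trace_smul, hρ.2, hσ.2, ← add_smul, hab, one_smul]

variable [DecidableEq n]

theorem vnEntropy_eq_shannon_eigenvalues {M : Matrix n n ℂ} (hM : M.IsHermitian) :
    vnEntropy M = shannon hM.eigenvalues := dif_pos hM

theorem vnEntropy_le_shannon_diagDist {M : Matrix n n ℂ} (hM : M.PosSemidef) :
    vnEntropy M ≤ shannon (diagDist M) := by
  rw [vnEntropy_eq_shannon_eigenvalues hM.isHermitian, shannon_eq_sum_negMulLog_div,
    shannon_eq_sum_negMulLog_div]
  exact div_le_div_of_nonneg_right (sum_map_eigenvalues_le_sum_map_diag hM.isHermitian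
    Real.concaveOn_negMulLog hM.eigenvalues_nonneg) (Real.log_nonneg one_le_two)

theorem vnEntropy_conjStarAlgAut {M : Matrix n n ℂ} (hM : M.IsHermitian)
    (U : unitaryGroup n ℂ) : vnEntropy (Unitary.conjStarAlgAut ℝ _ U M) = vnEntropy M := by
  have hUM : (Unitary.conjStarAlgAut ℝ _ U M).IsHermitian := IsSelfAdjoint.map hM _
  have hcharpoly : (Unitary.conjStarAlgAut ℝ _ U M).charpoly = M.charpoly := by
    rw [Unitary.conjStarAlgAut_apply, charpoly_mul_comm, ← Matrix.mul_assoc,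
      Unitary.coe_star_mul_self, Matrix.one_mul]
  rw [vnEntropy_eq_shannon_eigenvalues hUM, vnEntropy_eq_shannon_eigenvalues hM,
    (hUM.eigenvalues_eq_eigenvalues_iff hM).2 hcharpoly]

theorem vnEntropy_le_shannon_diagDist_conjStarAlgAut {M : Matrix n n ℂ} (hM : M.PosSemidef)
    (U : unitaryGroup n ℂ) :
    vnEntropy M ≤ shannon (diagDist (Unitary.conjStarAlgAut ℝ _ U M)) := by
  rw [← vnEntropy_conjStarAlgAut hM.isHermitian U]
  exact vnEntropy_le_shannon_diagDist (hM.mul_mul_conjTranspose_same (U : Matrix n n ℂ))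

theorem vnEntropy_eq_shannon_diagDist_star_eigenvectorUnitary {M : Matrix n n ℂ}
    (hM : M.IsHermitian) :
    vnEntropy M =
      shannon (diagDist (Unitary.conjStarAlgAut ℝ _ (star hM.eigenvectorUnitary) M)) := by
  have hdiag := hM.conjStarAlgAut_star_eigenvectorUnitary
  rw [Unitary.conjStarAlgAut_apply] at hdiag
  rw [vnEntropy_eq_shannon_eigenvalues hM, Unitary.conjStarAlgAut_apply, hdiag]
  congr 1 with i
  simp [diagDist]

theorem concaveOn_vnEntropy :
    ConcaveOn ℝ {M : Matrix n n ℂ | M.PosSemidef} vnEntropy := by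
  refine ⟨convex_posSemidef, fun M hM N hN a b ha hb hab => ?_⟩
  have hP : (a • M + b • N).PosSemidef := convex_posSemidef hM hN ha hb hab
  let φ := Unitary.conjStarAlgAut ℝ (Matrix n n ℂ) (star hP.isHermitian.eigenvectorUnitary)
  have hφ {L : Matrix n n ℂ} (hL : L.PosSemidef) : 0 ≤ diagDist (φ L) :=
    diagDist_nonneg (hL.mul_mul_conjTranspose_same _)
  calc a • vnEntropy M + b • vnEntropy N
      ≤ a • shannon (diagDist (φ M)) + b • shannon (diagDist (φ N)) := by
        gcongr
        · exact vnEntropy_le_shannon_diagDist_conjStarAlgAut hM _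
        · exact vnEntropy_le_shannon_diagDist_conjStarAlgAut hN _
    _ ≤ shannon (a • diagDist (φ M) + b • diagDist (φ N)) :=
        concaveOn_shannon.2 (hφ hM) (hφ hN) ha hb hab
    _ = shannon (diagDist (φ (a • M + b • N))) := by
        rw [map_add, map_smul, map_smul, diagDist_smul_add_smul]
    _ = vnEntropy (a • M + b • N) :=
        (vnEntropy_eq_shannon_diagDist_star_eigenvectorUnitary hP.isHermitian).symm

theorem vnEntropy_mul_conjTranspose_le (X : Matrix n m ℂ) :
    vnEntropy (X * Xᴴ) ≤ shannon (diagDist (Xᴴ * X)) := by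
  classical
  refine le_trans (le_of_eq ?_)
    (vnEntropy_le_shannon_diagDist (posSemidef_conjTranspose_mul_self X))
  rw [vnEntropy_eq_shannon_eigenvalues (isHermitian_mul_conjTranspose_self X),
    vnEntropy_eq_shannon_eigenvalues (isHermitian_conjTranspose_mul_self X),
    shannon_eq_sum_negMulLog_div, shannon_eq_sum_negMulLog_div,
    sum_map_eigenvalues_mul_conjTranspose_comm X Real.negMulLog_zero]

theorem IsDensity.isProbDist_eigenvalues {ρ : Matrix n n ℂ} (hρ : IsDensity ρ) :
    IsProbDist hρ.1.isHermitian.eigenvalues := by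
  refine ⟨hρ.1.eigenvalues_nonneg, ?_⟩
  simpa using congrArg Complex.re (hρ.1.isHermitian.trace_eq_sum_eigenvalues.symm.trans hρ.2)

theorem IsDensity.vnEntropy_nonneg {ρ : Matrix n n ℂ} (hρ : IsDensity ρ) : 0 ≤ vnEntropy ρ := by
  rw [vnEntropy_eq_shannon_eigenvalues hρ.1.isHermitian]
  exact hρ.isProbDist_eigenvalues.shannon_nonneg

theorem IsDensity.vnEntropy_le_logb_card {ρ : Matrix n n ℂ} (hρ : IsDensity ρ) :
    vnEntropy ρ ≤ Real.logb 2 (Fintype.card n) := by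
  rw [vnEntropy_eq_shannon_eigenvalues hρ.1.isHermitian]
  exact hρ.isProbDist_eigenvalues.shannon_le_logb_card

theorem vnEntropy_sum_smul_le {p : K → ℝ} (hp : ∀ k, 0 ≤ p k) {σ : K → Matrix n n ℂ}
    (hσ : ∀ k, IsDensity (σ k)) :
    vnEntropy (∑ k, p k • σ k) ≤ ∑ k, p k * vnEntropy (σ k) + shannon p := by
  choose C hC hC_diag using fun k =>
    exists_mul_conjTranspose_eq_and_conjTranspose_mul_eq_diagonal (hσ k).1
  let X : Matrix n (K × n) ℂ := of fun i x => √(p x.1) • C x.1 i x.2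
  have hX : X * Xᴴ = ∑ k, p k • σ k := by
    ext i j
    simp only [X, mul_apply, conjTranspose_apply, of_apply, Fintype.sum_prod_type, Matrix.sum_apply,
      Matrix.smul_apply, ← hC, Finset.smul_sum, star_smul, star_trivial, smul_mul_smul_comm,
      Real.mul_self_sqrt (hp _)]
  have hX_diag : diagDist (Xᴴ * X) =
      fun x => p x.1 * (hσ x.1).1.isHermitian.eigenvalues x.2 := by
    ext ⟨k, i⟩
    have hentry : (Xᴴ * X) (k, i) (k, i) = p k • ((C k)ᴴ * C k) i i := by
      simp only [X, mul_apply, conjTranspose_apply, of_apply, Finset.smul_sum, star_smul,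
        star_trivial, smul_mul_smul_comm, Real.mul_self_sqrt (hp _)]
    simp [diagDist, hentry, hC_diag]
  calc vnEntropy (∑ k, p k • σ k) ≤ shannon (diagDist (Xᴴ * X)) :=
        hX ▸ vnEntropy_mul_conjTranspose_le X
    _ = ∑ k, p k * vnEntropy (σ k) + shannon p := by
        rw [hX_diag, shannon_mul fun k => (hσ k).isProbDist_eigenvalues.2]
        simp only [fun k => vnEntropy_eq_shannon_eigenvalues (hσ k).1.isHermitian]

end Entropy

section MutualInformation

variable {A B K : Type} [Fintype K]

theorem ptraceB_sum_smul [Fintype B] (p : K → ℝ) (τ : K → Matrix (A × B) (A × B) ℂ) :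
    ptraceB (∑ k, p k • τ k) = ∑ k, p k • ptraceB (τ k) := by
  ext i j
  simp only [ptraceB, Matrix.sum_apply, of_apply, Matrix.smul_apply, Finset.smul_sum]
  exact Finset.sum_comm

theorem ptraceA_sum_smul [Fintype A] (p : K → ℝ) (τ : K → Matrix (A × B) (A × B) ℂ) :
    ptraceA (∑ k, p k • τ k) = ∑ k, p k • ptraceA (τ k) := by
  ext i j
  simp only [ptraceA, Matrix.sum_apply, of_apply, Matrix.smul_apply, Finset.smul_sum]
  exact Finset.sum_comm

variable [Fintype A] [Fintype B]

theorem IsDensity.ptraceB {τ : Matrix (A × B) (A × B) ℂ} (hτ : IsDensity τ) :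
    IsDensity (ptraceB τ) := by
  constructor
  · have hsum : _root_.ptraceB τ = ∑ b, τ.submatrix (·, b) (·, b) := by
      ext i j
      simp [_root_.ptraceB, Matrix.sum_apply]
    exact hsum ▸ posSemidef_sum _ fun b _ => hτ.1.submatrix _
  · rw [← hτ.2]
    simp [trace, _root_.ptraceB, Fintype.sum_prod_type]

theorem IsDensity.ptraceA {τ : Matrix (A × B) (A × B) ℂ} (hτ : IsDensity τ) :
    IsDensity (ptraceA τ) := by
  constructor
  · have hsum : _root_.ptraceA τ = ∑ a, τ.submatrix (a, ·) (a, ·) := by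
      ext i j
      simp [_root_.ptraceA, Matrix.sum_apply]
    exact hsum ▸ posSemidef_sum _ fun a _ => hτ.1.submatrix _
  · rw [← hτ.2]
    simp [trace, _root_.ptraceA, Fintype.sum_prod_type_right]

variable [DecidableEq A] [DecidableEq B]

theorem IsDensity.neg_logb_card_le_mutInfo {τ : Matrix (A × B) (A × B) ℂ} (hτ : IsDensity τ) :
    -Real.logb 2 (Fintype.card (A × B)) ≤ mutInfo τ := by
  rw [mutInfo]
  linarith [hτ.ptraceA.vnEntropy_nonneg, hτ.ptraceB.vnEntropy_nonneg, hτ.vnEntropy_le_logb_card]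

theorem mutInfo_sum_smul_le {p : K → ℝ} (hp : IsProbDist p) {τ : K → Matrix (A × B) (A × B) ℂ}
    (hτ : ∀ k, IsDensity (τ k)) :
    mutInfo (∑ k, p k • τ k) ≤ ∑ k, p k * mutInfo (τ k) + 2 * shannon p := by
  have hA := vnEntropy_sum_smul_le hp.1 fun k => (hτ k).ptraceB
  have hB := vnEntropy_sum_smul_le hp.1 fun k => (hτ k).ptraceA
  have hAB : ∑ k, p k * vnEntropy (τ k) ≤ vnEntropy (∑ k, p k • τ k) :=
    concaveOn_vnEntropy.le_map_sum (fun k _ => hp.1 k) hp.2 fun k _ => (hτ k).1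
  simp only [mutInfo, ptraceA_sum_smul, ptraceB_sum_smul, mul_add, mul_sub,
    Finset.sum_add_distrib, Finset.sum_sub_distrib]
  linarith

end MutualInformation

section TensorPower

theorem sum_prod_pi_prod_pi {ι A B R : Type*} [Fintype ι] [DecidableEq ι] [Fintype A] [Fintype B]
    [CommSemiring R] (F : ι → A × B → R) :
    ∑ x : (ι → A) × (ι → B), ∏ i, F i (x.1 i, x.2 i) = ∏ i, ∑ z, F i z := by
  rw [Fintype.prod_sum,
    ← (Equiv.arrowProdEquivProdArrow ι (fun _ => A) (fun _ => B)).sum_comp]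
  rfl

variable {A B : Type}

theorem conjTranspose_tpow (σ : Matrix (A × B) (A × B) ℂ) (n : ℕ) :
    (tpow σ n)ᴴ = tpow σᴴ n := by
  ext x y
  simp only [tpow, conjTranspose_apply, of_apply, star_prod]

variable [Fintype A] [Fintype B]

theorem tpow_mul (σ τ : Matrix (A × B) (A × B) ℂ) (n : ℕ) :
    tpow (σ * τ) n = tpow σ n * tpow τ n := by
  ext x y
  simp only [tpow, mul_apply, of_apply, ← Finset.prod_mul_distrib]
  exact (sum_prod_pi_prod_pi fun i z => σ (x.1 i, x.2 i) z * τ z (y.1 i, y.2 i)).symm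

theorem trace_tpow (σ : Matrix (A × B) (A × B) ℂ) (n : ℕ) :
    (tpow σ n).trace = σ.trace ^ n := by
  simpa [trace, tpow] using sum_prod_pi_prod_pi fun (_ : Fin n) z => σ z z

variable [DecidableEq A] [DecidableEq B]

theorem copyMarginal_tpow (σ : Matrix (A × B) (A × B) ℂ) {n : ℕ} (k : Fin n) :
    copyMarginal (tpow σ n) k = σ.trace ^ (n - 1) • σ := by
  ext x y
  let F : Fin n → A × B → ℂ :=
    Function.update (fun _ z => σ z z) k fun z => if z = x then σ x y else 0
  have hF_sum (i : Fin n) : ∑ z, F i z = Function.update (fun _ => σ.trace) k (σ x y) i := by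
    rcases eq_or_ne i k with rfl | hik
    · simp [F]
    · simp [F, hik, trace]
  have hterm (f : Fin n → A) (g : Fin n → B) :
      (if f k = x.1 ∧ g k = x.2 then
        tpow σ n (f, g) (Function.update f k y.1, Function.update g k y.2) else 0) =
      ∏ i, F i (f i, g i) := by
    split_ifs with hfg
    · simp only [tpow, of_apply]
      refine Finset.prod_congr rfl fun i _ => ?_
      rcases eq_or_ne i k with rfl | hik
      · simp [F, hfg]
      · simp [F, hik]
    · refine (Finset.prod_eq_zero (Finset.mem_univ k) ?_).symm
      simpa [F, Prod.ext_iff] using fun hf hg => absurd ⟨hf, hg⟩ hfg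
  calc copyMarginal (tpow σ n) k x y
      = ∑ f : Fin n → A, ∑ g : Fin n → B, ∏ i, F i (f i, g i) := by
        simp only [copyMarginal, of_apply, hterm]
    _ = ∏ i, ∑ z, F i z := by rw [← sum_prod_pi_prod_pi, Fintype.sum_prod_type]
    _ = ∏ i, Function.update (fun _ => σ.trace) k (σ x y) i := by simp only [hF_sum]
    _ = (σ.trace ^ (n - 1) • σ) x y := by
        rw [Finset.prod_update_of_mem (Finset.mem_univ k), Finset.prod_const,
          Finset.card_univ_sdiff, Finset.card_singleton, Fintype.card_fin,
          Matrix.smul_apply, smul_eq_mul, mul_comm]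

theorem posSemidef_tpow {A B : Type} [Finite A] [Finite B] {σ : Matrix (A × B) (A × B) ℂ}
    (hσ : σ.PosSemidef) (n : ℕ) : (tpow σ n).PosSemidef := by
  classical
  cases nonempty_fintype A
  cases nonempty_fintype B
  obtain ⟨C, rfl, -⟩ := exists_mul_conjTranspose_eq_and_conjTranspose_mul_eq_diagonal hσ
  rw [tpow_mul, ← conjTranspose_tpow]
  exact posSemidef_self_mul_conjTranspose _

end TensorPower

section Broadcast

variable {A B K : Type} [Fintype A] [Fintype B] [Fintype K] [DecidableEq A] [DecidableEq B] {n : ℕ}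

theorem IsDensity.isBroadcast_tpow {ρ : Matrix (A × B) (A × B) ℂ} (hρ : IsDensity ρ) (n : ℕ) :
    IsBroadcast n (tpow ρ n) ρ := by
  refine ⟨⟨posSemidef_tpow hρ.1 n, ?_⟩, fun k => ?_⟩
  · rw [trace_tpow, hρ.2, one_pow]
  · rw [copyMarginal_tpow, hρ.2, one_pow, one_smul]

theorem copyMarginal_sum_smul (p : K → ℝ)
    (τ : K → Matrix ((Fin n → A) × (Fin n → B)) ((Fin n → A) × (Fin n → B)) ℂ) (i : Fin n) :
    copyMarginal (∑ k, p k • τ k) i = ∑ k, p k • copyMarginal (τ k) i := by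
  ext x y
  simp only [copyMarginal, Matrix.sum_apply, of_apply, Matrix.smul_apply, Finset.smul_sum]
  conv_rhs => rw [Finset.sum_comm]
  refine Finset.sum_congr rfl fun f _ => ?_
  conv_rhs => rw [Finset.sum_comm]
  refine Finset.sum_congr rfl fun g _ => ?_
  split_ifs <;> simp

theorem IsBroadcast.sum_smul {p : K → ℝ} (hp : IsProbDist p)
    {τ : K → Matrix ((Fin n → A) × (Fin n → B)) ((Fin n → A) × (Fin n → B)) ℂ}
    {ρ : K → Matrix (A × B) (A × B) ℂ} (hτ : ∀ k, IsBroadcast n (τ k) (ρ k)) :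
    IsBroadcast n (∑ k, p k • τ k) (∑ k, p k • ρ k) := by
  refine ⟨convex_isDensity.sum_mem (fun k _ => hp.1 k) hp.2 fun k _ => (hτ k).1, fun i => ?_⟩
  simp only [copyMarginal_sum_smul, (hτ _).2]

theorem IsBroadcast.Ib_le_mutInfo
    {τ : Matrix ((Fin n → A) × (Fin n → B)) ((Fin n → A) × (Fin n → B)) ℂ}
    {ρ : Matrix (A × B) (A × B) ℂ} (hτ : IsBroadcast n τ ρ) : Ib n ρ ≤ mutInfo τ := by
  refine csInf_le ⟨-Real.logb 2 (Fintype.card ((Fin n → A) × (Fin n → B))), ?_⟩ ⟨τ, hτ, rfl⟩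
  rintro _ ⟨τ', hτ', rfl⟩
  exact hτ'.1.neg_logb_card_le_mutInfo

theorem IsDensity.exists_isBroadcast_mutInfo_lt {ρ : Matrix (A × B) (A × B) ℂ}
    (hρ : IsDensity ρ) {r : ℝ} (hr : Ib n ρ < r) : ∃ τ, IsBroadcast n τ ρ ∧ mutInfo τ < r := by
  obtain ⟨_, ⟨τ, hτ, rfl⟩, hτr⟩ :=
    exists_lt_of_csInf_lt (s := {x | ∃ τ, IsBroadcast n τ ρ ∧ x = mutInfo τ})
      ⟨_, tpow ρ n, hρ.isBroadcast_tpow n, rfl⟩ hr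
  exact ⟨τ, hτ, hτr⟩

theorem Ib_sum_smul_le {p : K → ℝ} (hp : IsProbDist p) {ρ : K → Matrix (A × B) (A × B) ℂ}
    (hρ : ∀ k, IsDensity (ρ k)) (n : ℕ) :
    Ib n (∑ k, p k • ρ k) ≤ ∑ k, p k * Ib n (ρ k) + 2 * shannon p := by
  refine le_of_forall_pos_le_add fun ε hε => ?_
  choose τ hτ hτ_lt using fun k =>
    (hρ k).exists_isBroadcast_mutInfo_lt (lt_add_of_pos_right (Ib n (ρ k)) hε)
  calc Ib n (∑ k, p k • ρ k)
      ≤ mutInfo (∑ k, p k • τ k) := (IsBroadcast.sum_smul hp hτ).Ib_le_mutInfo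
    _ ≤ ∑ k, p k * mutInfo (τ k) + 2 * shannon p := mutInfo_sum_smul_le hp fun k => (hτ k).1
    _ ≤ ∑ k, p k * (Ib n (ρ k) + ε) + 2 * shannon p := by
        gcongr with k
        · exact hp.1 k
        · exact (hτ_lt k).le
    _ = ∑ k, p k * Ib n (ρ k) + 2 * shannon p + ε := by
        simp only [mul_add, Finset.sum_add_distrib, ← Finset.sum_mul, hp.2, one_mul]
        ring

end Broadcast

/-- convexity of I_b^{(∞)} (stated via the defining limits). -/
theorem stmt_11 {A B K : Type} [Fintype A] [Fintype B] [Fintype K]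
    [DecidableEq A] [DecidableEq B]
    (p : K → ℝ) (hp : ∀ k, 0 ≤ p k) (hp1 : ∑ k, p k = 1)
    (ρ : K → Matrix (A × B) (A × B) ℂ) (hρ : ∀ k, IsDensity (ρ k))
    (L : K → ℝ) (hL : ∀ k, Tendsto (fun n : ℕ => Ib n (ρ k) / n) atTop (nhds (L k)))
    (Lmix : ℝ)
    (hLmix : Tendsto (fun n : ℕ => Ib n (∑ k, (p k : ℂ) • ρ k) / n) atTop (nhds Lmix)) :
    Lmix ≤ ∑ k, p k * L k := by
  simp only [Complex.coe_smul] at hLmix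
  have hbound : Tendsto (fun n : ℕ => ∑ k, p k * (Ib n (ρ k) / n) + 2 * shannon p / n) atTop
      (nhds (∑ k, p k * L k)) := by
    simpa only [add_zero] using (tendsto_finsetSum _ fun k _ => (hL k).const_mul (p k)).add
      (tendsto_const_div_atTop_nhds_zero_nat (2 * shannon p))
  refine le_of_tendsto_of_tendsto' hLmix hbound fun n => ?_
  calc Ib n (∑ k, p k • ρ k) / n
      ≤ (∑ k, p k * Ib n (ρ k) + 2 * shannon p) / n := by
        gcongr
        exact Ib_sum_smul_le ⟨hp, hp1⟩ hρ n
    _ = ∑ k, p k * (Ib n (ρ k) / n) + 2 * shannon p / n := by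
        simp only [add_div, Finset.sum_div, mul_div_assoc]

end
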